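/- Let a > 0, m > 1, α > 0, ε₀ ∈ (0, aα), and suppose -ε₀ ≤ inf_{ξ∈ℝ} μ₁(a,m,α;ξ) ≤ ε₀. Then the set M(a,m,α) of minimizers of ξ ↦ μ₁(a,m,α;ξ) is nonempty, and every ξ ∈ M(a,m,α) satisfies |ξ| ≤ √((1+a)·(1 - 1/m)^{-1}·α). -/

import Mathlib

open MeasureTheory Set Filter Topology

noncomputable section

/-- `B¹(ℝ₊)`-type regularity on the half line (smooth core):
`u`, `u'` and `t·u` are square integrable on `(0,∞)`. -/
def MemB1p (u : ℝ → ℝ) : Prop :=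
  Differentiable ℝ u ∧
  IntegrableOn (fun t => (u t)^2) (Ioi 0) ∧
  IntegrableOn (fun t => (deriv u t)^2) (Ioi 0) ∧
  IntegrableOn (fun t => t^2 * (u t)^2) (Ioi 0)

/-- The Robin quadratic form `q[γ,ξ]` of `-d²/dt² + (t-ξ)²` on `ℝ₊`. -/
def qRobin (γ ξ : ℝ) (u : ℝ → ℝ) : ℝ :=
  (∫ t in Ioi (0:ℝ), ((deriv u t)^2 + (t - ξ)^2 * (u t)^2)) + γ * (u 0)^2

/-- squared `L²(ℝ₊)` norm. -/
def np (u : ℝ → ℝ) : ℝ := ∫ t in Ioi (0:ℝ), (u t)^2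

/-- Lowest Robin eigenvalue `λ₁(γ,ξ)`, defined variationally. -/
def lambda1 (γ ξ : ℝ) : ℝ :=
  sInf {r : ℝ | ∃ u : ℝ → ℝ, MemB1p u ∧ np u ≠ 0 ∧ r = qRobin γ ξ u / np u}

/-- Lowest Neumann eigenvalue `λ₁^N(ξ)` (Robin with `γ = 0`). -/
def lambda1N (ξ : ℝ) : ℝ := lambda1 0 ξ

/-- Lowest Dirichlet eigenvalue `λ₁^D(ξ)`, defined variationally. -/
def lambda1D (ξ : ℝ) : ℝ :=
  sInf {r : ℝ | ∃ u : ℝ → ℝ, MemB1p u ∧ u 0 = 0 ∧ np u ≠ 0 ∧ r = qRobin 0 ξ u / np u}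

/-- The de Gennes constant `Θ₀ = inf_ξ λ₁^N(ξ)`. -/
def Theta0 : ℝ := sInf (Set.range lambda1N)

/-- `B¹(ℝ)`-type regularity on the whole line (smooth core). -/
def MemB1 (u : ℝ → ℝ) : Prop :=
  Differentiable ℝ u ∧
  Integrable (fun t => (u t)^2) ∧
  Integrable (fun t => (deriv u t)^2) ∧
  Integrable (fun t => t^2 * (u t)^2)

/-- The interface quadratic form `Q[a,m,α;ξ]` on `B¹(ℝ)`. -/
def QI (a m α ξ : ℝ) (u : ℝ → ℝ) : ℝ :=
  (∫ t in Ioi (0:ℝ), ((deriv u t)^2 + (t - ξ)^2 * (u t)^2 - α * (u t)^2)) +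
  ∫ t in Iio (0:ℝ), ((1/m) * ((deriv u t)^2 + (t - ξ)^2 * (u t)^2) + a * α * (u t)^2)

/-- squared `L²(ℝ)` norm. -/
def nR (u : ℝ → ℝ) : ℝ := ∫ t, (u t)^2

/-- Ground state energy `μ₁(a,m,α;ξ)` of the interface operator, defined variationally. -/
def mu1 (a m α ξ : ℝ) : ℝ :=
  sInf {r : ℝ | ∃ u : ℝ → ℝ, MemB1 u ∧ nR u ≠ 0 ∧ r = QI a m α ξ u / nR u}

/-!
Translating the well `(t - ξ)²` against the interface turns the dependence of `μ₁` on `ξ` into a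
dependence on the position of the interface. Handing a piece `s` of the left phase over to the
right phase raises the energy by `(1 - 1/m) ∫_s (u'² + (t - ξ)² u²) - (1 + a) α ∫_s u²`, which is
nonnegative as soon as `|t - ξ| ≥ d := √((1 + a)(1 - 1/m)⁻¹ α)` on `s`. So `μ₁(ξ) ≥ μ₁(d)` for
`ξ ≥ d`, and the increase is controlled by the mass of the test functions next to the interface.

Completing the square in `u'² + (t - ξ)² u²` bounds the energy below by the smaller bulk level
`κ = min (1 - α) (1/m + a α)` up to a boundary term `-(1 - 1/m) ξ u(0)²`. Hence `μ₁ ≥ κ` for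
`ξ ≤ 0`, while for `ξ > 0` a test function with energy below `κ` cannot be small at the interface,
which makes the increase of `μ₁` beyond `d` strict wherever `μ₁ < κ`. Finally `inf μ₁ < κ`: a
Gaussian centred at the well has energy below `1 - α` once `ξ > d`, and `inf μ₁ ≤ ε₀ < a α` lies
below the other level. Together with the continuity of `μ₁`, which follows from the concavity of
`μ₁(ξ) - ξ²`, this confines the minimizers to `(0, d]`. No eigenfunctions are needed.
-/

namespace MemB1

variable {u : ℝ → ℝ}

theorem memLp (hu : MemB1 u) : MemLp u 2 :=
  (memLp_two_iff_integrable_sq hu.1.continuous.aestronglyMeasurable).2 hu.2.1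

theorem memLp_deriv (hu : MemB1 u) : MemLp (deriv u) 2 :=
  (memLp_two_iff_integrable_sq (measurable_deriv u).aestronglyMeasurable).2 hu.2.2.1

theorem memLp_sub_mul (hu : MemB1 u) (ξ : ℝ) : MemLp (fun t => (t - ξ) * u t) 2 := by
  have hcont : Continuous fun t => t * u t := continuous_id.mul hu.1.continuous
  have hmul : MemLp (fun t => t * u t) 2 :=
    (memLp_two_iff_integrable_sq hcont.aestronglyMeasurable).2 <| by
      simpa only [mul_pow] using hu.2.2.2
  exact (hmul.sub (hu.memLp.const_mul ξ)).ae_eq (.of_forall fun t => (sub_mul t ξ (u t)).symm)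

theorem integrable_sub_sq_mul_sq (hu : MemB1 u) (ξ : ℝ) :
    Integrable fun t => (t - ξ) ^ 2 * u t ^ 2 := by
  simpa only [mul_pow] using (hu.memLp_sub_mul ξ).integrable_sq

theorem integrable_sub_mul_sq (hu : MemB1 u) (ξ : ℝ) : Integrable fun t => (t - ξ) * u t ^ 2 := by
  refine ((hu.memLp_sub_mul ξ).integrable_mul hu.memLp).congr (.of_forall fun t => ?_)
  simp only [Pi.mul_apply]
  ring

theorem integrable_oscDensity (hu : MemB1 u) (ξ : ℝ) :
    Integrable fun t => deriv u t ^ 2 + (t - ξ) ^ 2 * u t ^ 2 :=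
  hu.2.2.1.add (hu.integrable_sub_sq_mul_sq ξ)

theorem hasDerivAt_sub_mul_sq (hu : MemB1 u) (ξ t : ℝ) :
    HasDerivAt (fun t => (t - ξ) * u t ^ 2) (u t ^ 2 + 2 * (t - ξ) * u t * deriv u t) t := by
  refine (((hasDerivAt_id t).sub_const ξ).fun_mul ((hu.1 t).hasDerivAt.fun_pow 2)).congr_deriv ?_
  simp only [id]
  push_cast
  ring

theorem integrable_deriv_sub_mul_sq (hu : MemB1 u) (ξ : ℝ) :
    Integrable fun t => u t ^ 2 + 2 * (t - ξ) * u t * deriv u t := by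
  refine (hu.2.1.add (((hu.memLp_sub_mul ξ).integrable_mul hu.memLp_deriv).const_mul 2)).congr
    (.of_forall fun t => ?_)
  simp only [Pi.add_apply, Pi.mul_apply]
  ring

theorem integral_Ioi_deriv_sub_mul_sq (hu : MemB1 u) (ξ c : ℝ) :
    ∫ t in Ioi c, (u t ^ 2 + 2 * (t - ξ) * u t * deriv u t) = -((c - ξ) * u c ^ 2) := by
  have hderiv : ∀ t, HasDerivAt _ _ t := hu.hasDerivAt_sub_mul_sq ξ
  have hint := (hu.integrable_deriv_sub_mul_sq ξ).integrableOn (s := Ioi c)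
  rw [integral_Ioi_of_hasDerivAt_of_tendsto' (fun t _ => hderiv t) hint
    (tendsto_zero_of_hasDerivAt_of_integrableOn_Ioi (fun t _ => hderiv t) hint
      (hu.integrable_sub_mul_sq ξ).integrableOn), zero_sub]

theorem integral_Iic_deriv_sub_mul_sq (hu : MemB1 u) (ξ c : ℝ) :
    ∫ t in Iic c, (u t ^ 2 + 2 * (t - ξ) * u t * deriv u t) = (c - ξ) * u c ^ 2 := by
  have hderiv : ∀ t, HasDerivAt _ _ t := hu.hasDerivAt_sub_mul_sq ξ
  have hint := (hu.integrable_deriv_sub_mul_sq ξ).integrableOn (s := Iic c)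
  rw [integral_Iic_of_hasDerivAt_of_tendsto' (fun t _ => hderiv t) hint
    (tendsto_zero_of_hasDerivAt_of_integrableOn_Iic (fun t _ => hderiv t) hint
      (hu.integrable_sub_mul_sq ξ).integrableOn), sub_zero]

theorem comp_add_right (hu : MemB1 u) (η : ℝ) : MemB1 fun t => u (t + η) := by
  refine ⟨hu.1.comp (differentiable_id.add_const η), hu.2.1.comp_add_right η, ?_, ?_⟩
  · simpa only [deriv_comp_add_const] using hu.2.2.1.comp_add_right η
  · simpa only [add_sub_cancel_right] using (hu.integrable_sub_sq_mul_sq η).comp_add_right η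

end MemB1

/-- The squared `L²` norm of `u` over `s`. -/
def massOn (s : Set ℝ) (u : ℝ → ℝ) : ℝ := ∫ t in s, u t ^ 2

/-- The harmonic oscillator energy over `s`, for the well centred at `ξ`. -/
def oscEnergy (ξ : ℝ) (s : Set ℝ) (u : ℝ → ℝ) : ℝ :=
  ∫ t in s, (deriv u t ^ 2 + (t - ξ) ^ 2 * u t ^ 2)

section Oscillator

variable {u : ℝ → ℝ} {ξ : ℝ} {s t : Set ℝ}

theorem massOn_nonneg (s : Set ℝ) (u : ℝ → ℝ) : 0 ≤ massOn s u :=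
  integral_nonneg fun _ => sq_nonneg _

theorem oscEnergy_nonneg (ξ : ℝ) (s : Set ℝ) (u : ℝ → ℝ) : 0 ≤ oscEnergy ξ s u :=
  integral_nonneg fun _ => by positivity

theorem massOn_union (hu : MemB1 u) (hst : Disjoint s t) (ht : MeasurableSet t) :
    massOn (s ∪ t) u = massOn s u + massOn t u :=
  setIntegral_union hst ht hu.2.1.integrableOn hu.2.1.integrableOn

theorem oscEnergy_union (hu : MemB1 u) (hst : Disjoint s t) (ht : MeasurableSet t) :
    oscEnergy ξ (s ∪ t) u = oscEnergy ξ s u + oscEnergy ξ t u :=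
  have h := hu.integrable_oscDensity ξ
  setIntegral_union hst ht h.integrableOn h.integrableOn

theorem nR_nonneg (u : ℝ → ℝ) : 0 ≤ nR u :=
  integral_nonneg fun _ => sq_nonneg _

theorem massOn_univ (u : ℝ → ℝ) : massOn univ u = nR u :=
  setIntegral_univ

theorem nR_eq_massOn_add (hu : MemB1 u) (c : ℝ) : nR u = massOn (Iic c) u + massOn (Ioi c) u := by
  rw [← massOn_union hu (Iic_disjoint_Ioi le_rfl) measurableSet_Ioi, Iic_union_Ioi, massOn_univ]

theorem nR_comp_add_right (u : ℝ → ℝ) (η : ℝ) : nR (fun t => u (t + η)) = nR u :=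
  integral_add_right_eq_self (fun t => u t ^ 2) η

theorem massOn_comp_add_right (s : Set ℝ) (u : ℝ → ℝ) (η : ℝ) :
    massOn ((· + η) ⁻¹' s) (fun t => u (t + η)) = massOn s u :=
  (measurePreserving_add_right volume η).setIntegral_preimage_emb
    (measurableEmbedding_addRight η) (fun t => u t ^ 2) s

theorem oscEnergy_comp_add_right (ξ : ℝ) (s : Set ℝ) (u : ℝ → ℝ) (η : ℝ) :
    oscEnergy ξ ((· + η) ⁻¹' s) (fun t => u (t + η)) = oscEnergy (ξ + η) s u := by
  have h := (measurePreserving_add_right volume η).setIntegral_preimage_emb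
    (measurableEmbedding_addRight η) (fun t => deriv u t ^ 2 + (t - (ξ + η)) ^ 2 * u t ^ 2) s
  simpa only [oscEnergy, deriv_comp_add_const, add_sub_add_right_eq_sub] using h

theorem mul_massOn_le_oscEnergy (hu : MemB1 u) (hs : MeasurableSet s) {D : ℝ}
    (hD : ∀ t ∈ s, D ≤ (t - ξ) ^ 2) : D * massOn s u ≤ oscEnergy ξ s u := by
  rw [massOn, ← integral_const_mul]
  refine setIntegral_mono_on (hu.2.1.const_mul D).integrableOn
    (hu.integrable_oscDensity ξ).integrableOn hs fun t ht => ?_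
  linarith [mul_le_mul_of_nonneg_right (hD t ht) (sq_nonneg (u t)), sq_nonneg (deriv u t)]

/-- Completing the square, `u'² + (t - ξ)² u² = u² - ((t - ξ) u²)' + (u' + (t - ξ) u)²`. -/
theorem oscEnergy_eq (hu : MemB1 u) (ξ : ℝ) (s : Set ℝ) :
    oscEnergy ξ s u = massOn s u - (∫ t in s, (u t ^ 2 + 2 * (t - ξ) * u t * deriv u t)) +
      ∫ t in s, (deriv u t + (t - ξ) * u t) ^ 2 := by
  have hbdry := hu.integrable_deriv_sub_mul_sq ξ
  have hsq : Integrable fun t => (deriv u t + (t - ξ) * u t) ^ 2 :=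
    (hu.memLp_deriv.add (hu.memLp_sub_mul ξ)).integrable_sq
  have hdiff : Integrable fun t => u t ^ 2 - (u t ^ 2 + 2 * (t - ξ) * u t * deriv u t) :=
    hu.2.1.sub hbdry
  rw [massOn, ← integral_sub hu.2.1.integrableOn hbdry.integrableOn,
    ← integral_add hdiff.integrableOn hsq.integrableOn, oscEnergy]
  congr with t
  ring

theorem massOn_sub_le_oscEnergy (hu : MemB1 u) (ξ : ℝ) (s : Set ℝ) :
    massOn s u - ∫ t in s, (u t ^ 2 + 2 * (t - ξ) * u t * deriv u t) ≤ oscEnergy ξ s u := by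
  rw [oscEnergy_eq hu]
  exact le_add_of_nonneg_right (integral_nonneg fun _ => sq_nonneg _)

theorem massOn_add_le_oscEnergy_Ioi (hu : MemB1 u) (ξ c : ℝ) :
    massOn (Ioi c) u + (c - ξ) * u c ^ 2 ≤ oscEnergy ξ (Ioi c) u := by
  simpa only [hu.integral_Ioi_deriv_sub_mul_sq, sub_neg_eq_add] using
    massOn_sub_le_oscEnergy hu ξ (Ioi c)

theorem massOn_sub_le_oscEnergy_Iic (hu : MemB1 u) (ξ c : ℝ) :
    massOn (Iic c) u - (c - ξ) * u c ^ 2 ≤ oscEnergy ξ (Iic c) u := by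
  simpa only [hu.integral_Iic_deriv_sub_mul_sq] using massOn_sub_le_oscEnergy hu ξ (Iic c)

theorem oscEnergy_convex_combination (hu : MemB1 u) (s : Set ℝ) {p q : ℝ} (hpq : p + q = 1)
    (ξ η : ℝ) :
    oscEnergy (p * ξ + q * η) s u =
      p * oscEnergy ξ s u + q * oscEnergy η s u - p * q * (ξ - η) ^ 2 * massOn s u := by
  have hξ := (hu.integrable_oscDensity ξ).const_mul p
  have hη := (hu.integrable_oscDensity η).const_mul q
  have hmass := hu.2.1.const_mul (p * q * (ξ - η) ^ 2)
  have hsum : Integrable fun t => p * (deriv u t ^ 2 + (t - ξ) ^ 2 * u t ^ 2) +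
      q * (deriv u t ^ 2 + (t - η) ^ 2 * u t ^ 2) := hξ.add hη
  simp only [oscEnergy, massOn, ← integral_const_mul]
  rw [← integral_add hξ.integrableOn hη.integrableOn,
    ← integral_sub hsum.integrableOn hmass.integrableOn]
  congr with t
  obtain rfl : q = 1 - p := by linarith
  ring

end Oscillator

/-- The interface form with the well centred at `ξ` and the interface moved to `c`; the paper's form
is the case `c = 0`. -/
def interfaceForm (a m α ξ c : ℝ) (u : ℝ → ℝ) : ℝ :=
  (oscEnergy ξ (Ioi c) u - α * massOn (Ioi c) u) +
    (1 / m * oscEnergy ξ (Iic c) u + a * α * massOn (Iic c) u)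

/-- The smaller of the two bulk levels `1 - α` and `1/m + aα`, which are the limits of `μ₁` at `+∞`
and `-∞`. -/
def bulkThreshold (a m α : ℝ) : ℝ := min (1 - α) (1 / m + a * α)

/-- The distance `d = √((1 + a)(1 - 1/m)⁻¹ α)` from the centre of the well beyond which the left
phase costs less energy than the right one. -/
def criticalShift (a m α : ℝ) : ℝ := √((1 + a) * (1 - 1 / m)⁻¹ * α)

section Parameters

variable {a m α : ℝ}

theorem one_sub_one_div_pos (hm : 1 < m) : 0 < 1 - 1 / m := by
  rw [sub_pos, div_lt_one (by linarith)]
  exact hm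

theorem criticalShift_nonneg (a m α : ℝ) : 0 ≤ criticalShift a m α :=
  Real.sqrt_nonneg _

theorem mul_criticalShift_sq (hm : 1 < m) (hα : 0 ≤ (1 + a) * α) :
    (1 - 1 / m) * criticalShift a m α ^ 2 = (1 + a) * α := by
  have hk := one_sub_one_div_pos hm
  rw [criticalShift, mul_right_comm, Real.sq_sqrt (by positivity), mul_comm,
    inv_mul_cancel_right₀ hk.ne']

end Parameters

section InterfaceForm

variable {a m α ξ c c' : ℝ} {u : ℝ → ℝ}

theorem QI_eq_interfaceForm (hu : MemB1 u) (a m α ξ : ℝ) :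
    QI a m α ξ u = interfaceForm a m α ξ 0 u := by
  have hosc := hu.integrable_oscDensity ξ
  rw [QI, ← integral_Iic_eq_integral_Iio,
    integral_sub hosc.integrableOn (hu.2.1.const_mul α).integrableOn,
    integral_add (hosc.const_mul (1 / m)).integrableOn (hu.2.1.const_mul (a * α)).integrableOn,
    integral_const_mul, integral_const_mul, integral_const_mul]
  rfl

theorem interfaceForm_comp_add_right (a m α ξ c : ℝ) (u : ℝ → ℝ) (η : ℝ) :
    interfaceForm a m α ξ c (fun t => u (t + η)) = interfaceForm a m α (ξ + η) (c + η) u := by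
  have hIoi : Ioi c = (· + η) ⁻¹' Ioi (c + η) := by simp
  have hIic : Iic c = (· + η) ⁻¹' Iic (c + η) := by simp
  rw [interfaceForm, hIoi, hIic]
  simp only [oscEnergy_comp_add_right, massOn_comp_add_right, interfaceForm]

theorem min_mul_nR_le_interfaceForm (hu : MemB1 u) (hm : 0 ≤ m) (a α ξ c : ℝ) :
    min (-α) (a * α) * nR u ≤ interfaceForm a m α ξ c u := by
  have hleft := mul_nonneg (one_div_nonneg.2 hm) (oscEnergy_nonneg ξ (Iic c) u)
  rw [nR_eq_massOn_add hu c, interfaceForm]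
  linarith [oscEnergy_nonneg ξ (Ioi c) u,
    mul_le_mul_of_nonneg_right (min_le_left (-α) (a * α)) (massOn_nonneg (Ioi c) u),
    mul_le_mul_of_nonneg_right (min_le_right (-α) (a * α)) (massOn_nonneg (Iic c) u)]

theorem bulkThreshold_mul_nR_add_le (hu : MemB1 u) (hm : 0 ≤ m) (a α ξ c : ℝ) :
    bulkThreshold a m α * nR u + (1 - 1 / m) * ((c - ξ) * u c ^ 2) ≤
      interfaceForm a m α ξ c u := by
  have hright := massOn_add_le_oscEnergy_Ioi hu ξ c
  have hleft := mul_le_mul_of_nonneg_left (massOn_sub_le_oscEnergy_Iic hu ξ c)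
    (one_div_nonneg.2 hm)
  rw [nR_eq_massOn_add hu c, interfaceForm, bulkThreshold]
  linarith [
    mul_le_mul_of_nonneg_right (min_le_left (1 - α) (1 / m + a * α)) (massOn_nonneg (Ioi c) u),
    mul_le_mul_of_nonneg_right (min_le_right (1 - α) (1 / m + a * α)) (massOn_nonneg (Iic c) u)]

theorem interfaceForm_add_Iic (hu : MemB1 u) (a m α ξ c : ℝ) :
    interfaceForm a m α ξ c u +
        ((1 - 1 / m) * oscEnergy ξ (Iic c) u - (1 + a) * α * massOn (Iic c) u) =
      oscEnergy ξ univ u - α * nR u := by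
  rw [← Iic_union_Ioi (a := c), oscEnergy_union hu (Iic_disjoint_Ioi le_rfl) measurableSet_Ioi,
    nR_eq_massOn_add hu c, interfaceForm]
  ring

theorem interfaceForm_eq_add_Ioc (hu : MemB1 u) (a m α ξ : ℝ) (hc : c ≤ c') :
    interfaceForm a m α ξ c u = interfaceForm a m α ξ c' u +
      ((1 - 1 / m) * oscEnergy ξ (Ioc c c') u - (1 + a) * α * massOn (Ioc c c') u) := by
  have h := interfaceForm_add_Iic hu a m α ξ c
  have h' := interfaceForm_add_Iic hu a m α ξ c'
  have hdisj : Disjoint (Iic c) (Ioc c c') := Iic_disjoint_Ioc le_rfl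
  rw [← Iic_union_Ioc_eq_Iic hc, oscEnergy_union hu hdisj measurableSet_Ioc,
    massOn_union hu hdisj measurableSet_Ioc] at h'
  linarith

theorem interfaceForm_add_le (hu : MemB1 u) (hm : 1 < m) (hα : 0 ≤ (1 + a) * α) (hc : c ≤ c')
    {D : ℝ} (hD : ∀ t ∈ Ioc c c', D ≤ (t - ξ) ^ 2) :
    interfaceForm a m α ξ c' u +
        (1 - 1 / m) * (D - criticalShift a m α ^ 2) * massOn (Ioc c c') u ≤
      interfaceForm a m α ξ c u := by
  have hosc := mul_le_mul_of_nonneg_left (mul_massOn_le_oscEnergy hu measurableSet_Ioc hD)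
    (one_sub_one_div_pos hm).le
  rw [interfaceForm_eq_add_Ioc hu a m α ξ hc, ← mul_criticalShift_sq hm hα]
  linarith

theorem mul_sub_interfaceForm_le_massOn (hu : MemB1 u) (hm : 1 < m) (hα : 0 ≤ (1 + a) * α)
    (hc : 0 ≤ c) (hd : criticalShift a m α ≤ ξ - c) :
    c * (bulkThreshold a m α * nR u - interfaceForm a m α ξ 0 u) ≤
      (1 - 1 / m) * ξ * massOn (Ioc 0 c) u := by
  have hk := one_sub_one_div_pos hm
  have hd₀ := criticalShift_nonneg a m α
  have hpointwise : ∀ t ∈ Ioc 0 c, bulkThreshold a m α * nR u - interfaceForm a m α ξ 0 u ≤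
      (1 - 1 / m) * ξ * u t ^ 2 := by
    intro t ht
    have hmove := interfaceForm_add_le (D := criticalShift a m α ^ 2) (ξ := ξ) hu hm hα ht.1.le
      fun r hr => by nlinarith [hr.2, ht.2]
    have hbulk := bulkThreshold_mul_nR_add_le hu (zero_lt_one.trans hm).le a α ξ t
    nlinarith [mul_nonneg hk.le (mul_nonneg ht.1.le (sq_nonneg (u t)))]
  have h := setIntegral_ge_of_const_le_real measurableSet_Ioc (by simp) hpointwise
    (hu.2.1.const_mul _).integrableOn
  rwa [integral_const_mul, Real.volume_real_Ioc_of_le hc, sub_zero, mul_comm] at h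

theorem interfaceForm_semiconcave (hu : MemB1 u) (hm : 1 ≤ m) (a α c : ℝ) {p q : ℝ}
    (hp : 0 ≤ p) (hq : 0 ≤ q) (hpq : p + q = 1) (ξ η : ℝ) :
    p * interfaceForm a m α ξ c u + q * interfaceForm a m α η c u ≤
      interfaceForm a m α (p * ξ + q * η) c u + p * q * (ξ - η) ^ 2 * nR u := by
  have hm' : 1 / m ≤ 1 := (div_le_one (by linarith)).2 hm
  have hmass : 0 ≤ p * q * (ξ - η) ^ 2 * ((1 - 1 / m) * massOn (Iic c) u) :=
    mul_nonneg (by positivity) (mul_nonneg (sub_nonneg.2 hm') (massOn_nonneg _ _))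
  simp only [interfaceForm, oscEnergy_convex_combination hu _ hpq, nR_eq_massOn_add hu c]
  obtain rfl : q = 1 - p := by linarith
  linarith

end InterfaceForm

/-- The ground state of the harmonic oscillator `-∂² + t²`. -/
def gaussian (t : ℝ) : ℝ := Real.exp (-t ^ 2 / 2)

section Gaussian

theorem hasDerivAt_gaussian (t : ℝ) : HasDerivAt gaussian (-t * gaussian t) t := by
  have hexponent : HasDerivAt (fun t : ℝ => -t ^ 2 / 2) (-t) t :=
    ((hasDerivAt_pow 2 t).fun_neg.div_const 2).congr_deriv (by push_cast; ring)
  exact hexponent.exp.congr_deriv (mul_comm _ _)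

theorem deriv_gaussian : deriv gaussian = fun t => -t * gaussian t :=
  funext fun t => (hasDerivAt_gaussian t).deriv

theorem gaussian_sq (t : ℝ) : gaussian t ^ 2 = Real.exp (-1 * t ^ 2) := by
  rw [gaussian, ← Real.exp_nat_mul]
  congr 1
  push_cast
  ring

theorem memB1_gaussian : MemB1 gaussian := by
  have hmoment : Integrable fun t : ℝ => t ^ 2 * Real.exp (-1 * t ^ 2) := by
    simpa using integrable_rpow_mul_exp_neg_mul_sq one_pos (s := 2) (by norm_num)
  refine ⟨fun t => (hasDerivAt_gaussian t).differentiableAt, ?_, ?_, ?_⟩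
  · simpa only [gaussian_sq] using integrable_exp_neg_mul_sq one_pos
  · simpa only [deriv_gaussian, mul_pow, neg_sq, gaussian_sq] using hmoment
  · simpa only [gaussian_sq] using hmoment

theorem massOn_gaussian_pos {s : Set ℝ} (hs : 0 < volume s) : 0 < massOn s gaussian := by
  have hsupport : Function.support (fun t => gaussian t ^ 2) = univ := by
    ext t
    simp [gaussian]
  rw [massOn, setIntegral_pos_iff_support_of_nonneg_ae (.of_forall fun _ => sq_nonneg _)
    memB1_gaussian.2.1.integrableOn, hsupport, univ_inter]
  exact hs

theorem nR_gaussian_pos : 0 < nR gaussian :=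
  massOn_univ gaussian ▸ massOn_gaussian_pos (by simp)

theorem oscEnergy_univ_gaussian : oscEnergy 0 univ gaussian = nR gaussian := by
  have hbdry : ∫ t, (gaussian t ^ 2 + 2 * (t - 0) * gaussian t * deriv gaussian t) = 0 :=
    integral_eq_zero_of_hasDerivAt_of_integrable (memB1_gaussian.hasDerivAt_sub_mul_sq 0)
      (memB1_gaussian.integrable_deriv_sub_mul_sq 0) (memB1_gaussian.integrable_sub_mul_sq 0)
  have hsq : ∀ t, deriv gaussian t + (t - 0) * gaussian t = 0 := fun t => by
    rw [deriv_gaussian]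
    ring
  simp only [oscEnergy_eq memB1_gaussian, massOn_univ, setIntegral_univ, hbdry, hsq]
  simp

theorem interfaceForm_gaussian_lt {a m α c : ℝ} (hm : 1 < m) (hα : 0 ≤ (1 + a) * α)
    (hc : c < -criticalShift a m α) :
    interfaceForm a m α 0 c gaussian < (1 - α) * nR gaussian := by
  have hk := one_sub_one_div_pos hm
  have hd := criticalShift_nonneg a m α
  have hosc : c ^ 2 * massOn (Iic c) gaussian ≤ oscEnergy 0 (Iic c) gaussian :=
    mul_massOn_le_oscEnergy memB1_gaussian measurableSet_Iic fun t ht => by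
      nlinarith [mem_Iic.1 ht]
  have hgain : 0 < (1 - 1 / m) * (c ^ 2 - criticalShift a m α ^ 2) * massOn (Iic c) gaussian :=
    mul_pos (mul_pos hk (by nlinarith)) (massOn_gaussian_pos (by simp))
  have h := interfaceForm_add_Iic memB1_gaussian a m α 0 c
  rw [← mul_criticalShift_sq hm hα, oscEnergy_univ_gaussian] at h
  linarith [mul_le_mul_of_nonneg_left hosc hk.le]

end Gaussian

section GroundStateEnergy

variable {a m α ξ η : ℝ} {u : ℝ → ℝ}

theorem mu1_mul_nR_le (hu : MemB1 u) (hu₀ : 0 < nR u) (hm : 0 ≤ m) (a α ξ : ℝ) :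
    mu1 a m α ξ * nR u ≤ interfaceForm a m α ξ 0 u := by
  rw [← le_div_iff₀ hu₀, ← QI_eq_interfaceForm hu]
  refine csInf_le ⟨min (-α) (a * α), ?_⟩ ⟨u, hu, hu₀.ne', rfl⟩
  rintro _ ⟨v, hv, hv₀, rfl⟩
  rw [le_div_iff₀ ((nR_nonneg v).lt_of_ne' hv₀), QI_eq_interfaceForm hv]
  exact min_mul_nR_le_interfaceForm hv hm a α ξ 0

theorem mu1_sub_mul_nR_le (hu : MemB1 u) (hu₀ : 0 < nR u) (hm : 0 ≤ m) (a α ξ c : ℝ) :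
    mu1 a m α (ξ - c) * nR u ≤ interfaceForm a m α ξ c u := by
  have h := mu1_mul_nR_le (hu.comp_add_right c) ((nR_comp_add_right u c).symm ▸ hu₀) hm a α (ξ - c)
  rwa [nR_comp_add_right, interfaceForm_comp_add_right, sub_add_cancel, zero_add] at h

theorem le_mu1 {r : ℝ}
    (h : ∀ u, MemB1 u → 0 < nR u → r * nR u ≤ interfaceForm a m α ξ 0 u) : r ≤ mu1 a m α ξ := by
  refine le_csInf ⟨_, gaussian, memB1_gaussian, nR_gaussian_pos.ne', rfl⟩ ?_
  rintro _ ⟨u, hu, hu₀, rfl⟩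
  have hu₀' := (nR_nonneg u).lt_of_ne' hu₀
  rw [le_div_iff₀ hu₀', QI_eq_interfaceForm hu]
  exact h u hu hu₀'

theorem concaveOn_mu1_sub_sq (hm : 1 ≤ m) (a α : ℝ) :
    ConcaveOn ℝ univ fun ξ => mu1 a m α ξ - ξ ^ 2 := by
  refine ⟨convex_univ, fun ξ _ η _ p q hp hq hpq => ?_⟩
  simp only [smul_eq_mul]
  rw [le_sub_iff_add_le]
  refine le_mu1 fun u hu hu₀ => ?_
  have hm₀ := zero_le_one.trans hm
  have hξ := mul_le_mul_of_nonneg_left (mu1_mul_nR_le hu hu₀ hm₀ a α ξ) hp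
  have hη := mul_le_mul_of_nonneg_left (mu1_mul_nR_le hu hu₀ hm₀ a α η) hq
  have hsemi := interfaceForm_semiconcave hu hm a α 0 hp hq hpq ξ η
  obtain rfl : q = 1 - p := by linarith
  linarith

theorem continuous_mu1 (hm : 1 ≤ m) (a α : ℝ) : Continuous (mu1 a m α) := by
  have h := continuousOn_univ.1 ((concaveOn_mu1_sub_sq hm a α).continuousOn isOpen_univ)
  exact (h.add (continuous_pow 2)).congr fun ξ => sub_add_cancel _ _

theorem bulkThreshold_le_mu1 (hm : 1 < m) (a α : ℝ) (hξ : ξ ≤ 0) :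
    bulkThreshold a m α ≤ mu1 a m α ξ := by
  refine le_mu1 fun u hu _ => ?_
  have hbulk := bulkThreshold_mul_nR_add_le hu (zero_lt_one.trans hm).le a α ξ 0
  have hbdry : 0 ≤ (1 - 1 / m) * ((0 - ξ) * u 0 ^ 2) :=
    mul_nonneg (one_sub_one_div_pos hm).le (mul_nonneg (by linarith) (sq_nonneg _))
  linarith

theorem mu1_lt_one_sub (hm : 1 < m) (hα : 0 ≤ (1 + a) * α) (hξ : criticalShift a m α < ξ) :
    mu1 a m α ξ < 1 - α := by
  have h := mu1_sub_mul_nR_le memB1_gaussian nR_gaussian_pos (zero_lt_one.trans hm).le a α 0 (-ξ)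
  rw [zero_sub, neg_neg] at h
  exact lt_of_mul_lt_mul_right (h.trans_lt (interfaceForm_gaussian_lt hm hα (neg_lt_neg hξ)))
    nR_gaussian_pos.le

theorem mul_bulkThreshold_sub_mu1_le (hm : 1 < m) (hα : 0 ≤ (1 + a) * α)
    (hη : criticalShift a m α ≤ η) (hηξ : η ≤ ξ) (hξ : 0 < ξ) :
    (ξ - η) * (η ^ 2 - criticalShift a m α ^ 2) * (bulkThreshold a m α - mu1 a m α ξ) ≤
      ξ * (mu1 a m α ξ - mu1 a m α η) := by
  have hd := criticalShift_nonneg a m α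
  have hgap : 0 ≤ η ^ 2 - criticalShift a m α ^ 2 := by nlinarith
  set b := (ξ - η) * (η ^ 2 - criticalShift a m α ^ 2)
  have hden : 0 < ξ + b := add_pos_of_pos_of_nonneg hξ (mul_nonneg (sub_nonneg.2 hηξ) hgap)
  suffices h : (ξ * mu1 a m α η + b * bulkThreshold a m α) / (ξ + b) ≤ mu1 a m α ξ by
    rw [div_le_iff₀ hden] at h
    linarith
  refine le_mu1 fun u hu hu₀ => ?_
  have hmove := interfaceForm_add_le (a := a) (α := α) (D := η ^ 2) (ξ := ξ) hu hm hα
    (sub_nonneg.2 hηξ) fun t ht => by nlinarith [ht.2]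
  have htest := mu1_sub_mul_nR_le hu hu₀ (zero_lt_one.trans hm).le a α ξ (ξ - η)
  have hmass := mul_sub_interfaceForm_le_massOn hu hm hα (sub_nonneg.2 hηξ)
    (hη.trans_eq (sub_sub_cancel ξ η).symm)
  rw [sub_sub_cancel] at htest
  rw [div_mul_eq_mul_div, div_le_iff₀ hden]
  linarith [mul_le_mul_of_nonneg_left (htest.trans (le_sub_iff_add_le.2 hmove)) hξ.le,
    mul_le_mul_of_nonneg_left hmass hgap]

theorem mu1_criticalShift_le (hm : 1 < m) (hα : 0 ≤ (1 + a) * α) (hξ : criticalShift a m α ≤ ξ) :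
    mu1 a m α (criticalShift a m α) ≤ mu1 a m α ξ := by
  rcases hξ.eq_or_lt with rfl | hlt
  · rfl
  have hξ₀ : 0 < ξ := (criticalShift_nonneg a m α).trans_lt hlt
  have h := mul_bulkThreshold_sub_mu1_le hm hα le_rfl hξ hξ₀
  rw [sub_self, mul_zero, zero_mul] at h
  exact sub_nonneg.1 (nonneg_of_mul_nonneg_right h hξ₀)

theorem exists_mu1_lt_of_criticalShift_lt (hm : 1 < m) (hα : 0 ≤ (1 + a) * α)
    (hξ : criticalShift a m α < ξ) (hκ : mu1 a m α ξ < bulkThreshold a m α) :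
    ∃ η, mu1 a m α η < mu1 a m α ξ := by
  have hd := criticalShift_nonneg a m α
  obtain ⟨η, hdη, hηξ⟩ := exists_between hξ
  have hξ₀ : 0 < ξ := hd.trans_lt hξ
  have hgap : 0 < η ^ 2 - criticalShift a m α ^ 2 := by nlinarith
  have h := mul_bulkThreshold_sub_mu1_le hm hα hdη.le hηξ.le hξ₀
  have hpos := mul_pos (mul_pos (sub_pos.2 hηξ) hgap) (sub_pos.2 hκ)
  exact ⟨η, sub_pos.1 (pos_of_mul_pos_right (hpos.trans_le h) hξ₀.le)⟩

theorem exists_mu1_lt_bulkThreshold (hm : 1 < m) (hα : 0 ≤ (1 + a) * α)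
    (hinf : sInf (range (mu1 a m α)) < 1 / m + a * α) :
    ∃ ξ, mu1 a m α ξ < bulkThreshold a m α := by
  rcases min_choice (1 - α) (1 / m + a * α) with h | h
  · exact ⟨criticalShift a m α + 1, (mu1_lt_one_sub hm hα (lt_add_one _)).trans_eq h.symm⟩
  · obtain ⟨_, ⟨ξ, rfl⟩, hξ⟩ := exists_lt_of_csInf_lt (range_nonempty _) hinf
    exact ⟨ξ, hξ.trans_eq h.symm⟩

theorem exists_forall_mu1_le (hm : 1 < m) (hα : 0 ≤ (1 + a) * α)
    (hκ : mu1 a m α ξ < bulkThreshold a m α) : ∃ ξ₀, ∀ ξ', mu1 a m α ξ₀ ≤ mu1 a m α ξ' := by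
  have hd := criticalShift_nonneg a m α
  obtain ⟨ξ₀, -, hξ₀⟩ := isCompact_Icc.exists_isMinOn (nonempty_Icc.2 hd)
    (continuous_mu1 hm.le a α).continuousOn
  have hmin_pos : ∀ ξ', 0 < ξ' → mu1 a m α ξ₀ ≤ mu1 a m α ξ' := fun ξ' hξ' => by
    rcases le_total ξ' (criticalShift a m α) with h | h
    · exact hξ₀ ⟨hξ'.le, h⟩
    · exact (hξ₀ (right_mem_Icc.2 hd)).trans (mu1_criticalShift_le hm hα h)
  have hξ : 0 < ξ := lt_of_not_ge fun h => (bulkThreshold_le_mu1 hm a α h).not_gt hκ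
  refine ⟨ξ₀, fun ξ' => ?_⟩
  rcases lt_or_ge 0 ξ' with h | h
  · exact hmin_pos ξ' h
  · exact (hmin_pos ξ hξ).trans (hκ.le.trans (bulkThreshold_le_mu1 hm a α h))

end GroundStateEnergy

theorem minimizers_nonempty_and_bounded_general (a m α : ℝ) (hm : 1 < m)
    (hα : 0 ≤ (1 + a) * α) (hinf : sInf (range (mu1 a m α)) < 1 / m + a * α) :
    ({ξ : ℝ | ∀ ξ' : ℝ, mu1 a m α ξ ≤ mu1 a m α ξ'}.Nonempty) ∧
    ∀ ξ : ℝ, (∀ ξ' : ℝ, mu1 a m α ξ ≤ mu1 a m α ξ') →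
      ξ ∈ Ioc 0 √((1 + a) * (1 - 1 / m)⁻¹ * α) := by
  obtain ⟨ξ₁, hξ₁⟩ := exists_mu1_lt_bulkThreshold hm hα hinf
  refine ⟨exists_forall_mu1_le hm hα hξ₁, fun ξ hξ => ?_⟩
  have hκ : mu1 a m α ξ < bulkThreshold a m α := (hξ ξ₁).trans_lt hξ₁
  constructor
  · by_contra! h
    exact (bulkThreshold_le_mu1 hm a α h).not_gt hκ
  · by_contra! h
    obtain ⟨η, hη⟩ := exists_mu1_lt_of_criticalShift_lt hm hα h hκ
    exact (hξ η).not_gt hη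

/-- if `m > 1`, `ε₀ ∈ (0, aα)` and `-ε₀ ≤ inf_ξ μ₁(a,m,α;ξ) ≤ ε₀`,
then the set of minimizers of `ξ ↦ μ₁(a,m,α;ξ)` is nonempty and every minimizer
`ξ` satisfies `|ξ| ≤ √((1+a)(1-1/m)⁻¹ α)`. -/
theorem minimizers_nonempty_and_bounded (a m α ε₀ : ℝ) (ha : 0 < a) (hm : 1 < m)
    (hα : 0 < α) (hε : ε₀ ∈ Ioo (0:ℝ) (a * α))
    (hlow : -ε₀ ≤ sInf (Set.range (mu1 a m α)))
    (hup : sInf (Set.range (mu1 a m α)) ≤ ε₀) :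
    ({ξ : ℝ | ∀ ξ' : ℝ, mu1 a m α ξ ≤ mu1 a m α ξ'}.Nonempty) ∧
    ∀ ξ : ℝ, (∀ ξ' : ℝ, mu1 a m α ξ ≤ mu1 a m α ξ') →
      |ξ| ≤ Real.sqrt ((1 + a) * (1 - 1/m)⁻¹ * α) := by
  have hinf : sInf (range (mu1 a m α)) < 1 / m + a * α := by
    linarith [hε.2, one_div_pos.2 (zero_lt_one.trans hm)]
  obtain ⟨hne, hmem⟩ := minimizers_nonempty_and_bounded_general a m α hm (by positivity) hinf
  exact ⟨hne, fun ξ hξ => (abs_of_pos (hmem ξ hξ).1).trans_le (hmem ξ hξ).2⟩
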